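/- arXiv:1909.13483 — 2 statements merged into one kernel-verified Lean document; each statement's English description precedes it below -/
import Mathlib

section
/- Let E and F be real Banach spaces and let U ⊆ E be an open set. A map f : E → F is infinitely Fréchet differentiable on U if and only if for every infinitely differentiable curve c : ℝ → E whose range is contained in U, the composition f ∘ c : ℝ → F is infinitely differentiable. -/
/-!
One direction is the chain rule. For the converse (Boman's theorem), let `f` send smooth curves in
`U` to smooth curves. The argument works with finite differences and needs no partial derivatives.

* *Pure differences are controlled* (`pure_bound_of_convenient`): near each point of `U` the `m`-th
  forward difference of `f` with step `w` is `O(‖w‖ ^ m)`. Otherwise there are very short segments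
  converging rapidly to the point on which this fails worse and worse; a single smooth curve runs
  through all of them (`exists_special_curve`), and the `m`-th derivative of its composite with `f`
  would be unbounded on a compact interval.
* *Mixed differences are controlled*: a polarization identity (`mixedDiff_polarization`) bounds
  mixed differences with steps of norm at most `η` by `O(η ^ m)`, and subdividing the longer steps
  improves this to `O(∏ ‖h i‖)` (`locBddDiff_of_pure`).
* *Bounded mixed difference quotients of all orders imply smoothness*
  (`contDiffOn_of_locBddDiff`): the bound of order `2` makes `u ↦ f (x + u) - f x` additive up to
  second order, so it has a linear approximation, the Fréchet derivative
  (`exists_clm_of_almost_additive`); the bound of order `m + 1` for `f` passes to the bound of order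
  `m` for `fderiv ℝ f` (`locBddDiff_fderiv`), so the argument iterates.
-/

namespace Boman

open Filter Topology Finset

/-- The mixed difference of `f` at `x` in the directions `h i`, `i ∈ s`, with the sign convention
`∏ i ∈ s, (1 - T (h i))`, where `T u` is the translation operator `f ↦ f (· + u)`. -/
noncomputable def mixedDiff {E F : Type*} [AddCommGroup E] [AddCommGroup F]
    (s : Finset ℕ) (h : ℕ → E) (f : E → F) (x : E) : F :=
  ∑ S ∈ s.powerset, ((-1 : ℤ) ^ #S) • f (x + ∑ i ∈ S, h i)

/-! ### Mixed differences and polarization -/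

section Algebra

variable {E F : Type*} [AddCommGroup E] [AddCommGroup F]

lemma mixedDiff_empty (h : ℕ → E) (f : E → F) (x : E) : mixedDiff ∅ h f x = f x := by
  simp [mixedDiff]

lemma mixedDiff_insert {s : Finset ℕ} {a : ℕ} (ha : a ∉ s) (h : ℕ → E) (f : E → F) (x : E) :
    mixedDiff (insert a s) h f x = mixedDiff s h f x - mixedDiff s h f (x + h a) := by
  unfold mixedDiff
  rw [sum_powerset_insert ha, sub_eq_add_neg, ← sum_neg_distrib]
  congr 1
  refine sum_congr rfl fun S hS => ?_
  have haS : a ∉ S := fun h' => ha (mem_powerset.1 hS h')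
  rw [card_insert_of_notMem haS, sum_insert haS, pow_succ, mul_neg_one, neg_smul, add_assoc]

lemma mixedDiff_congr {s : Finset ℕ} {h h' : ℕ → E} (H : ∀ i ∈ s, h i = h' i) (f : E → F) (x : E) :
    mixedDiff s h f x = mixedDiff s h' f x := by
  unfold mixedDiff
  refine sum_congr rfl fun S hS => ?_
  rw [sum_congr rfl fun i hi => H i (mem_powerset.1 hS hi)]

lemma mixedDiff_eq_zero {s : Finset ℕ} {a : ℕ} (ha : a ∈ s) {h : ℕ → E} (h0 : h a = 0)
    (f : E → F) (x : E) : mixedDiff s h f x = 0 := by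
  rw [← insert_erase ha, mixedDiff_insert (notMem_erase a s), h0, add_zero, sub_self]

lemma mixedDiff_sub_shift (s : Finset ℕ) (h : ℕ → E) (f : E → F) (u x : E) :
    mixedDiff s h (fun y => f y - f (y + u)) x
      = mixedDiff s h f x - mixedDiff s h f (x + u) := by
  unfold mixedDiff
  rw [← sum_sub_distrib]
  refine sum_congr rfl fun S _ => ?_
  rw [smul_sub, add_right_comm]

/-- Polarization: a mixed difference is a combination of pure differences. Writing
`T` for translations, `∑ k, (-1)^k (m choose k) ∏ i < m, (1 - T ((1 - k/(i+1)) h i))` reduces to the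
term `k = 0`, because for `1 ≤ k ≤ m` the factor with `i + 1 = k` vanishes; expanding the products
and summing over `k` first produces `m`-th pure differences. -/
lemma mixedDiff_polarization [Module ℝ E] (m : ℕ) (h : ℕ → E) (f : E → F) (x : E) :
    ((-1 : ℤ) ^ m) • mixedDiff (range m) h f x
      = ∑ S ∈ (range m).powerset, ((-1 : ℤ) ^ #S) •
          (fwdDiff (-∑ i ∈ S, ((i : ℝ) + 1)⁻¹ • h i))^[m] f (x + ∑ i ∈ S, h i) := by
  have key : ∑ k ∈ range (m + 1), ((-1 : ℤ) ^ (m - k) * m.choose k) •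
      mixedDiff (range m) (fun i => (1 - (k : ℝ) * ((i : ℝ) + 1)⁻¹) • h i) f x
      = ((-1 : ℤ) ^ m) • mixedDiff (range m) h f x := by
    rw [sum_eq_single 0]
    · simp
    · intro k hk hk0
      obtain ⟨j, rfl⟩ := Nat.exists_eq_succ_of_ne_zero hk0
      rw [mixedDiff_eq_zero (a := j), smul_zero]
      · simp only [mem_range] at hk ⊢; omega
      · have : ((j : ℝ) + 1) ≠ 0 := by positivity
        push_cast
        rw [mul_inv_cancel₀ this, sub_self, zero_smul]
    · simp
  rw [← key]
  unfold mixedDiff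
  simp_rw [fwdDiff_iter_eq_sum_shift, smul_sum]
  rw [sum_comm]
  refine sum_congr rfl fun S _ => sum_congr rfl fun k _ => ?_
  rw [smul_comm]
  congr 3
  rw [add_assoc]
  congr 1
  rw [← Nat.cast_smul_eq_nsmul ℝ, smul_neg, smul_sum, ← sub_eq_add_neg, ← sum_sub_distrib]
  refine sum_congr rfl fun i _ => ?_
  rw [sub_smul, one_smul, mul_smul]

end Algebra

/-! ### Local bounds on difference quotients -/

section Bounds

variable {E F : Type*} [NormedAddCommGroup E] [NormedAddCommGroup F]

/-- Subdividing the step `N i • k i` into `N i` steps `k i`, one index at a time. -/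
lemma norm_mixedDiff_nsmul_le (x₀ : E) (N : ℕ → ℕ) (k : ℕ → E) (s : Finset ℕ) :
    ∀ (f : E → F) (B R : ℝ), (∀ y, ‖y - x₀‖ ≤ R → ‖mixedDiff s k f y‖ ≤ B) →
      ∀ x, ‖x - x₀‖ + ∑ i ∈ s, N i * ‖k i‖ ≤ R →
        ‖mixedDiff s (fun i => N i • k i) f x‖ ≤ (∏ i ∈ s, (N i : ℝ)) * B := by
  induction s using Finset.induction_on with
  | empty =>
    intro f B R H x hx
    simpa [mixedDiff_empty] using H x (by simpa using hx)
  | insert a s ha ih =>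
    intro f B R H x hx
    rw [sum_insert ha] at hx
    rw [mixedDiff_insert ha, ← mixedDiff_sub_shift, prod_insert ha, mul_comm (N a : ℝ), mul_assoc]
    refine ih _ (N a * B) (R - N a * ‖k a‖) (fun y hy => ?_) x (by linarith)
    have tele : mixedDiff s k (fun y => f y - f (y + N a • k a)) y
        = ∑ j ∈ range (N a), mixedDiff (insert a s) k f (y + j • k a) := by
      rw [mixedDiff_sub_shift]
      have := sum_range_sub' (fun j : ℕ => mixedDiff s k f (y + j • k a)) (N a)
      simp only [zero_smul, add_zero] at this
      rw [← this]
      refine sum_congr rfl fun j _ => ?_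
      rw [mixedDiff_insert ha, succ_nsmul, add_assoc]
    rw [tele]
    refine (norm_sum_le_of_le _ (f := fun j => mixedDiff (insert a s) k f (y + j • k a))
      (n := fun _ => B) fun j hj => H _ ?_).trans (by simp)
    have hj' : (j : ℝ) ≤ N a := by exact_mod_cast (mem_range.1 hj).le
    calc ‖y + j • k a - x₀‖ = ‖(y - x₀) + j • k a‖ := by congr 1; abel
      _ ≤ ‖y - x₀‖ + j * ‖k a‖ := (norm_add_le _ _).trans (by gcongr; exact norm_nsmul_le)
      _ ≤ R := by nlinarith [norm_nonneg (k a)]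

/-- `f` has locally bounded `m`-th mixed difference quotients on `V`. -/
def LocBddDiff (m : ℕ) (f : E → F) (V : Set E) : Prop :=
  ∀ x₀ ∈ V, ∃ r > 0, ∃ C ≥ 0, ∀ x, ‖x - x₀‖ ≤ r → ∀ h : ℕ → E, (∀ i < m, ‖h i‖ ≤ r) →
    ‖mixedDiff (range m) h f x‖ ≤ C * ∏ i ∈ range m, ‖h i‖

/-- Mixed differences with all steps of norm at most `η` inherit an `O(η ^ m)` bound from pure
differences. -/
lemma norm_mixedDiff_le_of_pure [NormedSpace ℝ E] {f : E → F} {x₀ : E} {m : ℕ} {r C : ℝ} (hC : 0 ≤ C)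
    (H : ∀ x w, ‖x - x₀‖ ≤ r → ‖w‖ ≤ r → ‖(fwdDiff w)^[m] f x‖ ≤ C * ‖w‖ ^ m)
    {η : ℝ} {h : ℕ → E} (hh : ∀ i < m, ‖h i‖ ≤ η) {x : E}
    (hx : ‖x - x₀‖ ≤ r / 2) (hη0 : 0 ≤ η) (hη : m * η ≤ r / 2) :
    ‖mixedDiff (range m) h f x‖ ≤ 2 ^ m * (C * (m * η) ^ m) := by
  have e : ‖mixedDiff (range m) h f x‖ = ‖((-1 : ℤ) ^ m) • mixedDiff (range m) h f x‖ := by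
    rcases neg_one_pow_eq_or ℤ m with h | h <;> simp [h]
  have r0 : 0 ≤ r / 2 := (norm_nonneg _).trans hx
  have hmη : 0 ≤ m * η := by positivity
  have hsum : ∀ (g : ℕ → E), (∀ i < m, ‖g i‖ ≤ η) → ∀ S ∈ (range m).powerset,
      ‖∑ i ∈ S, g i‖ ≤ m * η := by
    intro g hg S hS
    have hS := mem_powerset.1 hS
    calc ‖∑ i ∈ S, g i‖ ≤ ∑ i ∈ S, η :=
          norm_sum_le_of_le _ fun i hi => hg i (mem_range.1 (hS hi))
      _ = #S * η := by simp
      _ ≤ m * η := by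
          gcongr
          simpa using card_le_card hS
  rw [e, mixedDiff_polarization]
  refine (norm_sum_le_of_le _ (n := fun _ => C * (m * η) ^ m) fun S hS => ?_).trans ?_
  · have e2 : ∀ v : F, ‖((-1 : ℤ) ^ #S) • v‖ = ‖v‖ := fun v => by
      rcases neg_one_pow_eq_or ℤ #S with h | h <;> simp [h]
    have ha : ‖-∑ i ∈ S, ((i : ℝ) + 1)⁻¹ • h i‖ ≤ m * η := by
      rw [norm_neg]
      refine hsum _ (fun i hi => ?_) S hS
      rw [norm_smul, Real.norm_of_nonneg (by positivity)]
      have h1 : ((i : ℝ) + 1)⁻¹ ≤ 1 := inv_le_one_of_one_le₀ (by linarith [i.cast_nonneg (α := ℝ)])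
      calc _ ≤ 1 * ‖h i‖ := by gcongr
        _ ≤ η := by rw [one_mul]; exact hh i hi
    rw [e2]
    refine (H _ _ ?_ (by linarith)).trans (by gcongr)
    calc ‖x + ∑ i ∈ S, h i - x₀‖ = ‖(x - x₀) + ∑ i ∈ S, h i‖ := by congr 1; abel
      _ ≤ r := (norm_add_le _ _).trans (by linarith [hsum h hh S hS])
  · simp

/-- Local bounds `O(‖w‖ ^ m)` on pure differences give bounds on mixed differences by the product of
the norms of the steps: subdivision reduces steps of very different lengths to comparable ones. -/
lemma locBddDiff_of_pure [NormedSpace ℝ E] {f : E → F} {V : Set E} {m : ℕ} (hm : 0 < m)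
    (H : ∀ x₀ ∈ V, ∃ r > 0, ∃ C ≥ 0, ∀ x w, ‖x - x₀‖ ≤ r → ‖w‖ ≤ r →
      ‖(fwdDiff w)^[m] f x‖ ≤ C * ‖w‖ ^ m) : LocBddDiff m f V := by
  intro x₀ hx₀
  obtain ⟨r, hr, C, hC, H⟩ := H x₀ hx₀
  refine ⟨r / (2 * (m + 1)), by positivity, 2 ^ m * (2 ^ m * (C * m ^ m)), by positivity,
    fun x hx h hh => ?_⟩
  by_cases h0 : ∃ i < m, h i = 0
  · obtain ⟨i, hi, h0⟩ := h0
    rw [mixedDiff_eq_zero (mem_range.2 hi) h0, norm_zero]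
    positivity
  push Not at h0
  -- All steps are subdivided into pieces no longer than the shortest one.
  obtain ⟨a, ha, hmin⟩ := exists_min_image (range m) (fun i => ‖h i‖) ⟨0, mem_range.2 hm⟩
  set η := ‖h a‖ with hη
  have η0 : 0 < η := norm_pos_iff.2 (h0 a (mem_range.1 ha))
  have hmr : (m + 1 : ℝ) * (r / (2 * (m + 1))) = r / 2 := by field_simp
  have hρ : 0 < r / (2 * (m + 1)) := by positivity
  let N : ℕ → ℕ := fun i => ⌈‖h i‖ / η⌉₊
  have hN1 : ∀ i < m, 1 ≤ ‖h i‖ / η := fun i hi => (one_le_div η0).2 (hmin i (mem_range.2 hi))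
  have hN0 : ∀ i < m, (0 : ℝ) < N i := fun i hi =>
    lt_of_lt_of_le (lt_of_lt_of_le one_pos (hN1 i hi)) (Nat.le_ceil _)
  have hN2 : ∀ i < m, (N i : ℝ) ≤ 2 * (‖h i‖ / η) := fun i hi => by
    have := (Nat.ceil_lt_add_one (by positivity : 0 ≤ ‖h i‖ / η)).le
    have := hN1 i hi
    simp only [N]; linarith
  let k : ℕ → E := fun i => (N i : ℝ)⁻¹ • h i
  have hk : ∀ i < m, ‖k i‖ = ‖h i‖ / N i := fun i hi => by
    simp only [k]
    rw [norm_smul, norm_inv, Real.norm_of_nonneg (hN0 i hi).le, inv_mul_eq_div]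
  have hNk : ∀ i ∈ range m, h i = N i • k i := fun i hi => by
    simp only [k]
    rw [← Nat.cast_smul_eq_nsmul ℝ, smul_inv_smul₀ (hN0 i (mem_range.1 hi)).ne']
  have hkη : ∀ i < m, ‖k i‖ ≤ η := fun i hi => by
    rw [hk i hi, div_le_iff₀ (hN0 i hi), ← div_le_iff₀' η0]
    exact Nat.le_ceil _
  have hηr : η ≤ r / (2 * (m + 1)) := hh a (mem_range.1 ha)
  rw [mixedDiff_congr hNk]
  refine (norm_mixedDiff_nsmul_le x₀ N k (range m) f (2 ^ m * (C * (m * η) ^ m)) (r / 2)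
    (fun y hy => norm_mixedDiff_le_of_pure hC H hkη hy η0.le (by nlinarith)) x ?_).trans ?_
  · have : ∑ i ∈ range m, (N i : ℝ) * ‖k i‖ ≤ ∑ i ∈ range m, r / (2 * (m + 1)) := by
      refine sum_le_sum fun i hi => ?_
      have hi := mem_range.1 hi
      rw [hk i hi, mul_div_cancel₀ _ (hN0 i hi).ne']
      exact hh i hi
    simp only [sum_const, card_range, nsmul_eq_mul] at this
    linarith
  · calc (∏ i ∈ range m, (N i : ℝ)) * (2 ^ m * (C * (m * η) ^ m))
        ≤ (∏ i ∈ range m, (2 * (‖h i‖ / η))) * (2 ^ m * (C * (m * η) ^ m)) := by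
          gcongr with i hi
          exact hN2 i (mem_range.1 hi)
      _ = _ := by
          rw [prod_mul_distrib, prod_div_distrib]
          simp only [prod_const, card_range, mul_pow]
          field_simp

end Bounds

/-! ### Bounded difference quotients imply smoothness -/

section Derivative

/-- An almost additive map: if `g` is Lipschitz at `0` and its defect of additivity is
`O(‖u‖ * ‖v‖)`, then `g` agrees with a continuous linear map up to second order. The linear map is
the limit of `2 ^ n • g (2⁻ⁿ • v)`. -/
lemma exists_clm_of_almost_additive {E F : Type*} [NormedAddCommGroup E] [NormedSpace ℝ E]
    [NormedAddCommGroup F] [NormedSpace ℝ F] [CompleteSpace F] {g : E → F} {r L C : ℝ}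
    (hr : 0 < r) (hC : 0 ≤ C)
    (H1 : ∀ u, ‖u‖ ≤ r → ‖g u‖ ≤ L * ‖u‖)
    (H2 : ∀ u v, ‖u‖ ≤ r → ‖v‖ ≤ r → ‖g (u + v) - g u - g v‖ ≤ C * ‖u‖ * ‖v‖) :
    ∃ A : E →L[ℝ] F, ∀ u, ‖u‖ ≤ r → ‖g u - A u‖ ≤ C * ‖u‖ ^ 2 := by
  let Q : ℕ → E → F := fun n v => (2 : ℝ) ^ n • g (((2 : ℝ) ^ n)⁻¹ • v)
  have hnorm : ∀ (n : ℕ) (v : E), ‖((2 : ℝ) ^ n)⁻¹ • v‖ = ‖v‖ / 2 ^ n := fun n v => by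
    rw [norm_smul, norm_inv, norm_pow, Real.norm_ofNat, inv_mul_eq_div]
  have hpow : ∀ n : ℕ, (1 : ℝ) ≤ 2 ^ n := fun n => one_le_pow₀ (by norm_num)
  have hgeo : ∀ v, ‖v‖ ≤ r → ∀ n, dist (Q n v) (Q (n + 1) v) ≤ C * ‖v‖ ^ 2 / 2 / 2 ^ n := by
    intro v hv n
    set w := ((2 : ℝ) ^ (n + 1))⁻¹ • v with hw
    have hwn : ‖w‖ = ‖v‖ / 2 ^ (n + 1) := hnorm _ _
    have hwr : ‖w‖ ≤ r := by
      rw [hwn]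
      exact (div_le_self (norm_nonneg v) (hpow _)).trans hv
    have h2 : ((2 : ℝ) ^ n)⁻¹ • v = w + w := by
      rw [hw, ← add_smul]
      congr 1
      field_simp
      ring
    have : Q n v - Q (n + 1) v = (2 : ℝ) ^ n • (g (w + w) - g w - g w) := by
      simp only [Q]
      rw [h2, ← hw, pow_succ, mul_smul, two_smul, ← smul_sub]
      congr 1
      abel
    rw [dist_eq_norm, this, norm_smul, norm_pow, Real.norm_ofNat]
    calc (2 : ℝ) ^ n * ‖g (w + w) - g w - g w‖ ≤ 2 ^ n * (C * ‖w‖ * ‖w‖) := by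
          gcongr; exact H2 w w hwr hwr
      _ = C * ‖v‖ ^ 2 / 2 / 2 ^ n / 2 := by
          rw [hwn]; field_simp
          ring
      _ ≤ C * ‖v‖ ^ 2 / 2 / 2 ^ n := half_le_self (by positivity)
  have hsmall : ∀ v : E, ∀ᶠ n : ℕ in atTop, ‖((2 : ℝ) ^ n)⁻¹ • v‖ ≤ r := by
    intro v
    have : Tendsto (fun n : ℕ => ‖v‖ / (2 : ℝ) ^ n) atTop (𝓝 0) :=
      tendsto_const_nhds.div_atTop (tendsto_pow_atTop_atTop_of_one_lt (by norm_num))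
    filter_upwards [this.eventually_le_const hr] with n hn
    rwa [hnorm]
  have hlim : ∀ v, ∃ a, Tendsto (fun n => Q n v) atTop (𝓝 a) := by
    intro v
    obtain ⟨n₀, hn₀⟩ := (hsmall v).exists
    obtain ⟨a, ha⟩ := cauchySeq_tendsto_of_complete (cauchySeq_of_le_geometric_two (hgeo _ hn₀))
    refine ⟨(2 : ℝ) ^ n₀ • a, (tendsto_add_atTop_iff_nat n₀).1 ?_⟩
    convert ha.const_smul ((2 : ℝ) ^ n₀) using 2 with n
    simp only [Q]
    rw [smul_smul, smul_smul, pow_add, mul_inv, mul_comm ((2 : ℝ) ^ n₀)]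
  choose A hA using hlim
  have hzero : ∀ K : ℝ, Tendsto (fun n : ℕ => K / (2 : ℝ) ^ n) atTop (𝓝 0) := fun K =>
    tendsto_const_nhds.div_atTop (tendsto_pow_atTop_atTop_of_one_lt (by norm_num))
  have hadd : ∀ u v, A (u + v) = A u + A v := by
    intro u v
    have h1 : Tendsto (fun n => Q n (u + v) - Q n u - Q n v) atTop (𝓝 (A (u + v) - A u - A v)) :=
      ((hA _).sub (hA _)).sub (hA _)
    have h0 : Tendsto (fun n => Q n (u + v) - Q n u - Q n v) atTop (𝓝 0) := by
      refine squeeze_zero_norm' ?_ (hzero (C * ‖u‖ * ‖v‖))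
      filter_upwards [hsmall u, hsmall v] with n hu hv
      simp only [Q]
      rw [← smul_sub, ← smul_sub, smul_add, norm_smul, norm_pow, Real.norm_ofNat]
      calc _ ≤ (2 : ℝ) ^ n * (C * (‖u‖ / 2 ^ n) * (‖v‖ / 2 ^ n)) := by
            rw [← hnorm, ← hnorm]; gcongr; exact H2 _ _ hu hv
        _ = _ := by field_simp
    have := tendsto_nhds_unique h1 h0
    rw [sub_sub, sub_eq_zero] at this
    exact this
  have hbd : ∀ v, ‖A v‖ ≤ L * ‖v‖ := by
    intro v
    refine le_of_tendsto (hA v).norm ?_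
    filter_upwards [hsmall v] with n hn
    simp only [Q]
    rw [norm_smul, norm_pow, Real.norm_ofNat]
    calc _ ≤ (2 : ℝ) ^ n * (L * (‖v‖ / 2 ^ n)) := by
          rw [← hnorm]; gcongr; exact H1 _ hn
      _ = _ := by field_simp
  let A' : E →+ F := AddMonoidHom.mk' A hadd
  refine ⟨A'.toRealLinearMap (AddMonoidHomClass.continuous_of_bound A' L hbd), fun u hu => ?_⟩
  have := dist_le_of_le_geometric_two_of_tendsto₀ (hgeo u hu) (hA u)
  rw [dist_eq_norm] at this
  have h0 : ‖g u - A u‖ ≤ C * ‖u‖ ^ 2 := by simpa [Q] using this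
  exact h0

lemma differentiableAt_of_locBddDiff {E F : Type*} [NormedAddCommGroup E] [NormedSpace ℝ E]
    [NormedAddCommGroup F] [NormedSpace ℝ F] [CompleteSpace F] {f : E → F} {V : Set E}
    (h1 : LocBddDiff 1 f V) (h2 : LocBddDiff 2 f V) {x : E} (hx : x ∈ V) :
    DifferentiableAt ℝ f x := by
  obtain ⟨r₁, hr₁, L, hL, H1⟩ := h1 x hx
  obtain ⟨r₂, hr₂, C, hC, H2⟩ := h2 x hx
  have H1' : ∀ u, ‖u‖ ≤ min r₁ r₂ → ‖f (x + u) - f x‖ ≤ L * ‖u‖ := by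
    intro u hu
    have := H1 x (by simpa using hr₁.le) (fun _ => u) (fun _ _ => hu.trans (min_le_left _ _))
    have e : range 1 = insert 0 ∅ := rfl
    rw [e, mixedDiff_insert (notMem_empty _), mixedDiff_empty, mixedDiff_empty] at this
    rw [norm_sub_rev]
    simpa using this
  have H2' : ∀ u v, ‖u‖ ≤ min r₁ r₂ → ‖v‖ ≤ min r₁ r₂ →
      ‖(f (x + (u + v)) - f x) - (f (x + u) - f x) - (f (x + v) - f x)‖ ≤ C * ‖u‖ * ‖v‖ := by
    intro u v hu hv
    have := H2 x (by simpa using hr₂.le) (fun i => if i = 0 then v else u) (fun i _ => by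
      split_ifs
      exacts [hv.trans (min_le_right _ _), hu.trans (min_le_right _ _)])
    have e : range 2 = insert 1 (insert 0 ∅) := by decide
    rw [e, mixedDiff_insert (by simp), mixedDiff_insert (notMem_empty _),
      mixedDiff_insert (notMem_empty _)] at this
    simp only [mixedDiff_empty] at this
    convert this using 1
    · congr 1
      simp [add_assoc]
      abel
    · simp; ring
  obtain ⟨A, hA⟩ := exists_clm_of_almost_additive (g := fun u => f (x + u) - f x)
    (lt_min hr₁ hr₂) hC H1' H2'
  refine (hasFDerivAt_iff_isLittleO_nhds_zero.2 ?_ : HasFDerivAt f A x).differentiableAt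
  have hO : (fun u => f (x + u) - f x - A u) =O[𝓝 0] fun u => ‖u‖ ^ 2 := by
    refine Asymptotics.IsBigO.of_bound C ?_
    filter_upwards [Metric.closedBall_mem_nhds (0 : E) (lt_min hr₁ hr₂)] with u hu
    rw [Real.norm_of_nonneg (by positivity)]
    exact hA u (by simpa using hu)
  exact hO.trans_isLittleO (Asymptotics.isLittleO_norm_pow_id one_lt_two)

/-- Mixed differences commute with differentiation, so the bound of order `m + 1` for `f` controls
the operator norm of the mixed differences of order `m` of `fderiv ℝ f`. -/
lemma locBddDiff_fderiv {E F : Type*} [NormedAddCommGroup E] [NormedSpace ℝ E]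
    [NormedAddCommGroup F] [NormedSpace ℝ F] {f : E → F} {V : Set E} (hV : IsOpen V)
    (hd : ∀ x ∈ V, DifferentiableAt ℝ f x) {m : ℕ} (H : LocBddDiff (m + 1) f V) :
    LocBddDiff m (fderiv ℝ f) V := by
  intro x₀ hx₀
  obtain ⟨r, hr, C, hC, H⟩ := H x₀ hx₀
  obtain ⟨ε, hε, hball⟩ := Metric.isOpen_iff.1 hV x₀ hx₀
  set ρ := min r (ε / (m + 2)) with hρ
  have hρ0 : 0 < ρ := lt_min hr (by positivity)
  refine ⟨ρ, hρ0, C, hC, fun x hx h hh => ?_⟩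
  have hmem : ∀ S ∈ (range m).powerset, x + ∑ i ∈ S, h i ∈ V := by
    intro S hS
    have hS := mem_powerset.1 hS
    apply hball
    rw [mem_ball_iff_norm]
    have hρε : (m + 2) * ρ ≤ ε := by
      rw [← le_div_iff₀' (by positivity)]
      exact min_le_right _ _
    have : ‖∑ i ∈ S, h i‖ ≤ m * ρ := by
      calc ‖∑ i ∈ S, h i‖ ≤ ∑ i ∈ S, ρ :=
            norm_sum_le_of_le _ fun i hi => hh i (mem_range.1 (hS hi))
        _ = #S * ρ := by simp
        _ ≤ m * ρ := by
            gcongr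
            simpa using card_le_card hS
    calc ‖x + ∑ i ∈ S, h i - x₀‖ = ‖(x - x₀) + ∑ i ∈ S, h i‖ := by congr 1; abel
      _ ≤ ρ + m * ρ := (norm_add_le _ _).trans (by linarith)
      _ < ε := by linarith
  have hder : HasFDerivAt (fun y => mixedDiff (range m) h f y)
      (mixedDiff (range m) h (fderiv ℝ f) x) x := by
    unfold mixedDiff
    refine HasFDerivAt.fun_sum fun S hS => ?_
    have h1 : HasFDerivAt (fun y => f (y + ∑ i ∈ S, h i)) (fderiv ℝ f (x + ∑ i ∈ S, h i)) x :=
      (hasFDerivAt_comp_add_right _).2 (hd _ (hmem S hS)).hasFDerivAt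
    rcases neg_one_pow_eq_or ℤ #S with e | e
    · simpa [e] using h1
    · simpa [e] using h1.fun_neg
  refine hder.le_of_lip' (by positivity) ?_
  filter_upwards [Metric.closedBall_mem_nhds x hρ0] with y hy
  rw [mem_closedBall_iff_norm] at hy
  have hlt : ∀ i ∈ range m, Function.update h m (y - x) i = h i := fun i hi =>
    Function.update_of_ne (mem_range.1 hi).ne _ _
  have := H x (hx.trans (min_le_left _ _)) (Function.update h m (y - x)) (fun i hi => by
    rcases Nat.lt_succ_iff_lt_or_eq.1 hi with hi | rfl
    · rw [hlt i (mem_range.2 hi)]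
      exact (hh i hi).trans (min_le_left _ _)
    · rw [Function.update_self]
      exact hy.trans (min_le_left _ _))
  rw [range_add_one, mixedDiff_insert (by simp), mixedDiff_congr hlt, mixedDiff_congr hlt,
    Function.update_self, add_sub_cancel, prod_insert (by simp), Function.update_self,
    prod_congr rfl fun i hi => by rw [hlt i hi], norm_sub_rev] at this
  linarith

/-- The universe of `F` is arranged to contain `E →L[ℝ] F`, so that the induction can pass
to the derivative. -/
lemma contDiffOn_of_locBddDiff.{u, v} {E : Type u} [NormedAddCommGroup E] [NormedSpace ℝ E]
    {V : Set E} (hV : IsOpen V) (n : ℕ) :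
    ∀ {F : Type (max u v)} [NormedAddCommGroup F] [NormedSpace ℝ F] [CompleteSpace F] (f : E → F),
      (∀ m, 0 < m → LocBddDiff m f V) → ContDiffOn ℝ n f V := by
  induction n with
  | zero =>
    intro F _ _ _ f H
    rw [Nat.cast_zero, contDiffOn_zero]
    exact fun x hx => (differentiableAt_of_locBddDiff (H 1 one_pos) (H 2 two_pos)
      hx).continuousAt.continuousWithinAt
  | succ n ih =>
    intro F _ _ _ f H
    have hd : ∀ x ∈ V, DifferentiableAt ℝ f x := fun x hx =>
      differentiableAt_of_locBddDiff (H 1 one_pos) (H 2 two_pos) hx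
    rw [Nat.cast_add, Nat.cast_one, contDiffOn_succ_iff_fderiv_of_isOpen hV]
    exact ⟨fun x hx => (hd x hx).differentiableWithinAt, by simp,
      ih _ fun m _ => locBddDiff_fderiv hV hd (H (m + 1) m.succ_pos)⟩

end Derivative

/-! ### Smooth curves through prescribed segments -/

section Curves

/-- Iterated mean value inequality. -/
lemma norm_fwdDiff_iter_le {F : Type*} [NormedAddCommGroup F] [NormedSpace ℝ F] {K τ a : ℝ}
    (hτ : 0 ≤ τ) (m : ℕ) : ∀ (b : ℝ) (g : ℝ → F), ContDiff ℝ m g →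
      (∀ t ∈ Set.Icc a b, ‖iteratedDeriv m g t‖ ≤ K) →
      ∀ t, a ≤ t → t + m * τ ≤ b → ‖(fwdDiff τ)^[m] g t‖ ≤ K * τ ^ m := by
  induction m generalizing K with
  | zero =>
    intro b g _ H t ht hb
    simpa using H t ⟨ht, by simpa using hb⟩
  | succ m ih =>
    intro b g hg H t ht hb
    push_cast at hb
    have hgm : ContDiff ℝ m g := hg.of_le (by exact_mod_cast m.le_succ)
    have hshift : ContDiff ℝ m (fun t => g (t + τ)) := hgm.comp (by fun_prop)
    rw [Function.iterate_succ_apply]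
    have := ih (K := K * τ) (b - τ) (fwdDiff τ g) (hshift.sub hgm) (fun s hs => ?_) t ht
      (by linarith)
    · rw [pow_succ']; linarith
    · have e : iteratedDeriv m (fwdDiff τ g) s
          = iteratedDeriv m g (s + τ) - iteratedDeriv m g s := by
        have := iteratedDeriv_fun_sub (x := s) (n := m) hshift.contDiffAt hgm.contDiffAt
        rw [iteratedDeriv_comp_add_const] at this
        exact this
      rw [e]
      have hdiff : Differentiable ℝ (iteratedDeriv m g) :=
        hg.differentiable_iteratedDeriv m (by exact_mod_cast m.lt_succ_self)
      have := (convex_Icc a b).norm_image_sub_le_of_norm_deriv_le (𝕜 := ℝ) (f := iteratedDeriv m g)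
        (C := K) (x := s) (y := s + τ) (fun x _ => hdiff x)
        (fun x hx => by rw [← iteratedDeriv_succ]; exact H x hx)
        ⟨hs.1, by linarith [hs.2]⟩ ⟨by linarith [hs.1], by linarith [hs.2]⟩
      simpa [abs_of_nonneg hτ] using this

lemma fwdDiff_iter_comp_line {E F : Type*} [AddCommGroup E] [Module ℝ E] [AddCommGroup F]
    (f : E → F) (c : ℝ → E) (m : ℕ) {t τ : ℝ} {x w : E}
    (hc : ∀ j ≤ m, c (t + j * τ) = x + j • w) :
    (fwdDiff τ)^[m] (f ∘ c) t = (fwdDiff w)^[m] f x := by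
  rw [fwdDiff_iter_eq_sum_shift, fwdDiff_iter_eq_sum_shift]
  refine sum_congr rfl fun j hj => ?_
  rw [nsmul_eq_mul, Function.comp_apply, hc j (Nat.lt_succ_iff.1 (mem_range.1 hj))]

/-- A fixed sequence of smooth profiles on `ℝ`: near `2⁻ⁿ`, `ψ n` is `1` and all others vanish. The constants `M n` bound all derivatives of order at most `n` of
`t ↦ (ψ n t, ψ n t * (t - 2⁻ⁿ))`. -/
lemma exists_profiles : ∃ (ψ : ℕ → ℝ → ℝ) (M : ℕ → ℝ),
    (∀ n, ContDiff ℝ (⊤ : ℕ∞) (ψ n)) ∧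
    (∀ n t, |t - (1 / 2) ^ n| ≤ (1 / 2) ^ n / 8 → ψ n t = 1 ∧ ∀ j ≠ n, ψ j t = 0) ∧
    (∀ n, 0 < M n) ∧
    (∀ n, ∀ k ≤ n, ∀ t,
      ‖iteratedFDeriv ℝ k (fun t => (ψ n t, ψ n t * (t - (1 / 2) ^ n))) t‖ ≤ M n) := by
  let B : ∀ n : ℕ, ContDiffBump (((1 : ℝ) / 2) ^ n) := fun n =>
    { rIn := (1 / 2) ^ n / 8, rOut := (1 / 2) ^ n / 4, rIn_pos := by positivity
      rIn_lt_rOut := by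
        have : (0 : ℝ) < (1 / 2) ^ n := by positivity
        linarith }
  have hsm : ∀ n, ContDiff ℝ (⊤ : ℕ∞) (B n) := fun n => (B n).contDiff
  have hsm2 : ∀ n, ContDiff ℝ (⊤ : ℕ∞) (fun t => (B n t, B n t * (t - (1 / 2) ^ n))) := fun n =>
    (hsm n).prodMk ((hsm n).mul (by fun_prop))
  have hsupp : ∀ n, HasCompactSupport (fun t => (B n t, B n t * (t - (1 / 2) ^ n))) := fun n =>
    (B n).hasCompactSupport.mono fun t ht h0 => ht (by simp [h0])
  have hbd : ∀ n k : ℕ, ∃ C, ∀ t,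
      ‖iteratedFDeriv ℝ k (fun t => (B n t, B n t * (t - (1 / 2) ^ n))) t‖ ≤ C := fun n k =>
    ((hsm2 n).continuous_iteratedFDeriv (by exact_mod_cast le_top)).bounded_above_of_compact_support
      ((hsupp n).iteratedFDeriv k)
  choose C hC using hbd
  refine ⟨fun n => B n, fun n => 1 + ∑ k ∈ range (n + 1), |C n k|, hsm, fun n t ht => ⟨?_, ?_⟩,
    fun n => by positivity, fun n k hk t => ?_⟩
  · exact (B n).one_of_mem_closedBall (by rwa [Metric.mem_closedBall, Real.dist_eq])
  · intro j hj
    refine (B j).zero_of_le_dist ?_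
    rw [Real.dist_eq]
    change (1 / 2) ^ j / 4 ≤ _
    have h0 : (0 : ℝ) < (1 / 2) ^ n := by positivity
    have h0' : (0 : ℝ) < (1 / 2) ^ j := by positivity
    have ht := abs_le.1 ht
    rcases lt_or_gt_of_ne hj with h | h
    · have : ((1 : ℝ) / 2) ^ n ≤ (1 / 2) ^ (j + 1) :=
        pow_le_pow_of_le_one (by norm_num) (by norm_num) h
      rw [pow_succ] at this
      rw [abs_sub_comm]
      exact le_trans (by linarith) (le_abs_self _)
    · have : ((1 : ℝ) / 2) ^ j ≤ (1 / 2) ^ (n + 1) :=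
        pow_le_pow_of_le_one (by norm_num) (by norm_num) h
      rw [pow_succ] at this
      exact le_trans (by linarith) (le_abs_self _)
  · calc _ ≤ |C n k| := (hC n k t).trans (le_abs_self _)
      _ ≤ ∑ k ∈ range (n + 1), |C n k| :=
        single_le_sum (f := fun k => |C n k|) (fun _ _ => abs_nonneg _)
          (mem_range.2 (Nat.lt_succ_of_le hk))
      _ ≤ _ := by linarith

/-- The special curve lemma: there are fixed speeds `s n > 0` such that any sequence of short
segments `x n + t • b n`, with `x n` within `s n` of `x₀` and `‖b n‖ ≤ s n`, is run through by one
smooth curve near the times `2⁻ⁿ`, without leaving the `ε`-ball around `x₀`. The speeds are chosen small against the derivatives of the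
profiles, which makes the series defining the curve converge with all derivatives. -/
lemma exists_special_curve {E : Type*} [NormedAddCommGroup E] [NormedSpace ℝ E] [CompleteSpace E]
    {ε : ℝ} (hε : 0 < ε) : ∃ s : ℕ → ℝ, (∀ n, 0 < s n) ∧
      ∀ (x₀ : E) (x b : ℕ → E), (∀ n, ‖x n - x₀‖ ≤ s n) → (∀ n, ‖b n‖ ≤ s n) →
        ∃ c : ℝ → E, ContDiff ℝ (⊤ : ℕ∞) c ∧ (∀ t, ‖c t - x₀‖ < ε) ∧
          ∀ n t, |t - (1 / 2) ^ n| ≤ (1 / 2) ^ n / 8 → c t = x n + (t - (1 / 2) ^ n) • b n := by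
  obtain ⟨ψ, M, hψ, hψ1, hM, hbd⟩ := exists_profiles
  refine ⟨fun n => ε / 8 * (1 / 2) ^ n / M n, fun n => by have := hM n; positivity,
    fun x₀ x b hx hb => ?_⟩
  let Φ : ℕ → ℝ → ℝ × ℝ := fun n t => (ψ n t, ψ n t * (t - (1 / 2) ^ n))
  have hΦ : ∀ n, ContDiff ℝ (⊤ : ℕ∞) (Φ n) := fun n =>
    (hψ n).prodMk ((hψ n).mul (by fun_prop))
  let A : ℕ → ℝ × ℝ →L[ℝ] E := fun n =>
    (ContinuousLinearMap.fst ℝ ℝ ℝ).smulRight (x n - x₀)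
      + (ContinuousLinearMap.snd ℝ ℝ ℝ).smulRight (b n)
  have hA : ∀ n, ‖A n‖ ≤ ε / 4 * (1 / 2) ^ n / M n := by
    intro n
    have h1 : ‖(ContinuousLinearMap.fst ℝ ℝ ℝ).smulRight (x n - x₀)‖ ≤ ‖x n - x₀‖ := by
      rw [ContinuousLinearMap.norm_smulRight_apply]
      exact mul_le_of_le_one_left (norm_nonneg _) (ContinuousLinearMap.norm_fst_le ..)
    have h2 : ‖(ContinuousLinearMap.snd ℝ ℝ ℝ).smulRight (b n)‖ ≤ ‖b n‖ := by
      rw [ContinuousLinearMap.norm_smulRight_apply]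
      exact mul_le_of_le_one_left (norm_nonneg _) (ContinuousLinearMap.norm_snd_le ..)
    calc ‖A n‖ ≤ ε / 8 * (1 / 2) ^ n / M n + ε / 8 * (1 / 2) ^ n / M n :=
          (norm_add_le _ _).trans (add_le_add (h1.trans (hx n)) (h2.trans (hb n)))
      _ = _ := by ring
  have hbd' : ∀ n, ∀ k ≤ n, ∀ t, ‖iteratedFDeriv ℝ k (A n ∘ Φ n) t‖ ≤ ε / 4 * (1 / 2) ^ n := by
    intro n k hk t
    have hMn := hM n
    calc _ ≤ ‖A n‖ * ‖iteratedFDeriv ℝ k (Φ n) t‖ :=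
          (A n).norm_iteratedFDeriv_comp_left (hΦ n).contDiffAt (by exact_mod_cast le_top)
      _ ≤ (ε / 4 * (1 / 2) ^ n / M n) * M n := by
          gcongr
          exacts [hA n, hbd n k hk t]
      _ = _ := by field_simp
  have hsum : HasSum (fun n : ℕ => ε / 4 * (1 / 2) ^ n) (ε / 4 * 2) :=
    hasSum_geometric_two.mul_left _
  refine ⟨fun t => x₀ + ∑' n, (A n ∘ Φ n) t, ?_, fun t => ?_, fun n t ht => ?_⟩
  · refine contDiff_const.add (contDiff_tsum_of_eventually (v := fun _ n => ε / 4 * (1 / 2) ^ n)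
      (fun n => (A n).contDiff.comp (hΦ n)) (fun _ _ => hsum.summable) fun k _ => ?_)
    rw [Nat.cofinite_eq_atTop]
    filter_upwards [eventually_ge_atTop k] with n hn
    exact hbd' n k hn
  · rw [add_sub_cancel_left]
    refine (tsum_of_norm_bounded hsum fun n => ?_).trans_lt (by linarith)
    simpa using hbd' n 0 n.zero_le t
  · obtain ⟨h1, h0⟩ := hψ1 n t ht
    beta_reduce
    rw [tsum_eq_single n]
    · simp [A, Φ, h1]
      abel
    · intro j hj
      simp [A, Φ, h0 j hj]

/-- If the pure difference quotients of order `m` blew up at `x₀`, a special curve through the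
offending segments would have a composite with unbounded `m`-th derivative on `[0, 2]`. -/
lemma pure_bound_of_convenient {E F : Type*} [NormedAddCommGroup E] [NormedSpace ℝ E]
    [CompleteSpace E] [NormedAddCommGroup F] [NormedSpace ℝ F] {U : Set E} (hU : IsOpen U)
    {f : E → F}
    (hf : ∀ c : ℝ → E, ContDiff ℝ (⊤ : ℕ∞) c → Set.range c ⊆ U → ContDiff ℝ (⊤ : ℕ∞) (f ∘ c))
    {m : ℕ} (hm : 0 < m) {x₀ : E} (hx₀ : x₀ ∈ U) :
    ∃ r > 0, ∃ C ≥ 0, ∀ x w, ‖x - x₀‖ ≤ r → ‖w‖ ≤ r →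
      ‖(fwdDiff w)^[m] f x‖ ≤ C * ‖w‖ ^ m := by
  obtain ⟨ε, hε, hball⟩ := Metric.isOpen_iff.1 hU x₀ hx₀
  obtain ⟨s, hs, hcurve⟩ := exists_special_curve (E := E) hε
  by_contra! hcon
  have hq : ∀ n : ℕ, (0 : ℝ) < (1 / 2) ^ n / 8 := fun n => by positivity
  have hmpos : (0 : ℝ) < m := by exact_mod_cast hm
  have hex : ∀ n : ℕ, ∃ x w : E, ‖x - x₀‖ ≤ s n ∧ m * (‖w‖ / s n) ≤ (1 / 2) ^ n / 8 ∧
      n * (‖w‖ / s n) ^ m < ‖(fwdDiff w)^[m] f x‖ := by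
    intro n
    have hsn := hs n
    obtain ⟨x, w, hx, hw, h⟩ := hcon (min (s n) (s n * ((1 / 2) ^ n / 8) / m))
      (lt_min hsn (by positivity)) (n / s n ^ m) (by positivity)
    refine ⟨x, w, hx.trans (min_le_left _ _), ?_, ?_⟩
    · have := hw.trans (min_le_right _ _)
      rw [le_div_iff₀ hmpos] at this
      rw [mul_div_assoc', div_le_iff₀ hsn]
      linarith
    · rwa [div_pow, mul_div_left_comm, mul_comm]
  choose x w hx hw hlarge using hex
  have hw0 : ∀ n, 0 < ‖w n‖ := by
    intro n
    rw [norm_pos_iff]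
    intro h0
    have := hlarge n
    obtain ⟨k, rfl⟩ := Nat.exists_eq_succ_of_ne_zero hm.ne'
    have e : fwdDiff (0 : E) f = fun _ => 0 := by ext; simp [fwdDiff]
    have e2 : ∀ k : ℕ, (fwdDiff (0 : E))^[k] (fun _ : E => (0 : F)) = fun _ => 0 := fun k =>
      Function.iterate_fixed (by ext; simp [fwdDiff]) k
    rw [h0, Function.iterate_succ_apply, e, e2] at this
    simp at this
  set τ : ℕ → ℝ := fun n => ‖w n‖ / s n with hτ
  have hτ0 : ∀ n, 0 < τ n := fun n => div_pos (hw0 n) (hs n)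
  obtain ⟨c, hc, hcε, hcn⟩ := hcurve x₀ x (fun n => (τ n)⁻¹ • w n) hx (fun n => by
    rw [norm_smul, norm_inv, Real.norm_of_nonneg (hτ0 n).le, hτ]
    have := hw0 n
    have := hs n
    apply le_of_eq
    field_simp)
  have hg : ContDiff ℝ (⊤ : ℕ∞) (f ∘ c) := hf c hc <| by
    rintro _ ⟨t, rfl⟩
    exact hball (mem_ball_iff_norm.2 (hcε t))
  obtain ⟨K, hK⟩ := isCompact_Icc.exists_bound_of_continuousOn (s := Set.Icc (0 : ℝ) 2)
    (hg.continuous_iteratedDeriv m (by exact_mod_cast le_top)).continuousOn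
  obtain ⟨n, hn⟩ := exists_nat_ge K
  have h1 : (fwdDiff (τ n))^[m] (f ∘ c) ((1 / 2) ^ n) = (fwdDiff (w n))^[m] f (x n) := by
    refine fwdDiff_iter_comp_line f c m fun j hj => ?_
    have hjm : (j : ℝ) ≤ m := by exact_mod_cast hj
    have hjτ : 0 ≤ j * τ n := mul_nonneg j.cast_nonneg (hτ0 n).le
    rw [hcn n, add_sub_cancel_left, smul_smul, mul_assoc, mul_inv_cancel₀ (hτ0 n).ne', mul_one,
      Nat.cast_smul_eq_nsmul]
    rw [add_sub_cancel_left, abs_of_nonneg hjτ]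
    exact (mul_le_mul_of_nonneg_right hjm (hτ0 n).le).trans (hw n)
  have h2 := norm_fwdDiff_iter_le (hτ0 n).le m 2 (f ∘ c) (hg.of_le (by exact_mod_cast le_top)) hK
    ((1 / 2) ^ n) (by positivity) (by
      have : ((1 : ℝ) / 2) ^ n ≤ 1 := pow_le_one₀ (by norm_num) (by norm_num)
      linarith [hw n])
  rw [h1] at h2
  have h3 : K * τ n ^ m ≤ n * τ n ^ m := mul_le_mul_of_nonneg_right hn (pow_nonneg (hτ0 n).le m)
  linarith [hlarge n]

end Curves

lemma contDiffOn_of_convenient.{u, v} {E : Type u} {F : Type v}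
    [NormedAddCommGroup E] [NormedSpace ℝ E] [CompleteSpace E]
    [NormedAddCommGroup F] [NormedSpace ℝ F] [CompleteSpace F]
    {U : Set E} (hU : IsOpen U) {f : E → F}
    (h : ∀ c : ℝ → E, ContDiff ℝ (⊤ : ℕ∞) c → Set.range c ⊆ U → ContDiff ℝ (⊤ : ℕ∞) (f ∘ c)) :
    ContDiffOn ℝ (⊤ : ℕ∞) f U := by
  -- `ULift` moves `F` to a universe containing the spaces of continuous linear maps out of `E`.
  let e : F ≃L[ℝ] ULift.{u} F := ContinuousLinearEquiv.ulift.symm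
  have h' : ∀ c : ℝ → E, ContDiff ℝ (⊤ : ℕ∞) c → Set.range c ⊆ U →
      ContDiff ℝ (⊤ : ℕ∞) ((e ∘ f) ∘ c) := fun c hc hcU => e.contDiff.comp (h c hc hcU)
  refine e.comp_contDiffOn_iff.1 (contDiffOn_infty.2 fun n => ?_)
  exact contDiffOn_of_locBddDiff.{u, v} hU n (e ∘ f) fun m hm =>
    locBddDiff_of_pure hm fun x₀ hx₀ => pure_bound_of_convenient hU h' hm hx₀

end Boman

/-- On Banach spaces, a map is infinitely Fréchet differentiable on an open set `U`
if and only if it sends smooth curves with range in `U` to smooth curves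
(convenient smoothness). -/
theorem frechet_smooth_iff_convenient_smooth
    {E F : Type*} [NormedAddCommGroup E] [NormedSpace ℝ E] [CompleteSpace E]
    [NormedAddCommGroup F] [NormedSpace ℝ F] [CompleteSpace F]
    {U : Set E} (hU : IsOpen U) (f : E → F) :
    ContDiffOn ℝ (⊤ : ℕ∞) f U ↔
      ∀ c : ℝ → E, ContDiff ℝ (⊤ : ℕ∞) c → Set.range c ⊆ U → ContDiff ℝ (⊤ : ℕ∞) (f ∘ c) := by
  exact ⟨fun h c hc hcU => h.comp_contDiff hc fun t => hcU ⟨t, rfl⟩,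
    Boman.contDiffOn_of_convenient hU⟩
end

section
/- Let d be a natural number and f : (Fin d → ℝ) → ℝ. If for every infinitely differentiable curve c : ℝ → (Fin d → ℝ) the composition f ∘ c : ℝ → ℝ is infinitely differentiable, then f is infinitely differentiable. -/
/-!
The proof combines a curve construction with Fourier inversion.

If the `n`-th derivative of `f` along a fixed direction `v` were unbounded near a point `x`, one
could pick points `y m → x` as fast as desired at which the `n`-th derivative along `v` is as large
as desired. A smooth curve through `x` can be built (`exists_curve`) that runs near the time
`(1/2)^m` along the line `y m + e m * (t - (1/2)^m) • v`; the `n`-th derivative of `f` along this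
curve is then unbounded near time `0`, a contradiction. Hence all iterated directional derivatives
of `f` are locally bounded (`SmoothAlongCurves.locally_bounded`); the same curves show that `f` is
continuous.

Smoothness is local and the hypothesis is stable under multiplication by a bump function, so `f` may
be taken compactly supported. All iterated derivatives of `f` along a coordinate direction are then
bounded, compactly supported and measurable, hence integrable, and integration by parts along lines
(which does not require joint differentiability) bounds `|ξ i| ^ n * |𝓕 f ξ|` for all `i` and `n`.
So `𝓕 f` decays faster than any power, and `f`, being its inverse Fourier transform, is smooth.
-/

open Filter Topology MeasureTheory FourierTransform
open scoped ContDiff RealInnerProductSpace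

/-! ### Smooth curves through rapidly converging points -/

/-- A series `∑ φ m • y m` of compactly supported smooth functions with vector coefficients is smooth
as soon as the coefficients decay fast enough. The threshold `e` is chosen diagonally: `e m`
controls the derivatives of `φ m` of order at most `m`. -/
theorem exists_rapid_coeff {E : Type*} [NormedAddCommGroup E] [NormedSpace ℝ E] [CompleteSpace E]
    (φ : ℕ → ℝ → ℝ) (hφ : ∀ m, ContDiff ℝ ∞ (φ m)) (hc : ∀ m, HasCompactSupport (φ m)) :
    ∃ e : ℕ → ℝ, (∀ m, 0 < e m) ∧ ∀ y : ℕ → E, (∀ m, ‖y m‖ ≤ e m) →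
      ContDiff ℝ ∞ (fun t => ∑' m, φ m t • y m) := by
  have hB : ∀ k m, ∃ C, ∀ t, ‖iteratedFDeriv ℝ k (φ m) t‖ ≤ C := fun k m =>
    ((hc m).iteratedFDeriv k).exists_bound_of_continuous
      ((hφ m).continuous_iteratedFDeriv (by exact_mod_cast le_top))
  choose B hB using hB
  have hB0 : ∀ k m, 0 ≤ B k m := fun k m => (norm_nonneg _).trans (hB k m 0)
  have hS : ∀ m, 0 ≤ ∑ k ∈ Finset.range (m + 1), B k m := fun m =>
    Finset.sum_nonneg fun k _ => hB0 k m
  refine ⟨fun m => (1 / 2) ^ m / (1 + ∑ k ∈ Finset.range (m + 1), B k m), fun m => ?_, fun y hy => ?_⟩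
  · have := hS m
    positivity
  refine contDiff_tsum_of_eventually (v := fun _ m => (1 / 2 : ℝ) ^ m)
    (fun m => (hφ m).smul contDiff_const) (fun k _ => summable_geometric_two) fun k _ => ?_
  rw [Nat.cofinite_eq_atTop]
  filter_upwards [eventually_ge_atTop k] with m hm t
  have h1 : (fun t => φ m t • y m) = (ContinuousLinearMap.toSpanSingleton ℝ (y m)) ∘ φ m := by
    ext t; simp
  rw [h1]
  refine (ContinuousLinearMap.norm_iteratedFDeriv_comp_left (N := ∞) _ (hφ m).contDiffAt
    (by exact_mod_cast le_top)).trans ?_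
  rw [ContinuousLinearMap.norm_toSpanSingleton]
  have h2 : B k m ≤ ∑ k ∈ Finset.range (m + 1), B k m :=
    Finset.single_le_sum (fun k _ => hB0 k m) (Finset.mem_range.2 (Nat.lt_succ_of_le hm))
  have h3 := hS m
  calc ‖y m‖ * ‖iteratedFDeriv ℝ k (φ m) t‖
      ≤ (1 / 2) ^ m / (1 + ∑ k ∈ Finset.range (m + 1), B k m) *
          (1 + ∑ k ∈ Finset.range (m + 1), B k m) := by
        gcongr
        · exact hy m
        · linarith [hB k m t]
    _ = (1 / 2) ^ m := by field_simp

/-- If `y m → x` fast enough, some smooth curve passes through `x` at time `0` and runs, near each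
time `(1/2)^m`, along the line through `y m` in direction `v` with speed `e m`. -/
theorem exists_curve {E : Type*} [NormedAddCommGroup E] [NormedSpace ℝ E] [CompleteSpace E]
    (x v : E) :
    ∃ e : ℕ → ℝ, (∀ m, 0 < e m) ∧ ∀ y : ℕ → E, (∀ m, ‖y m - x‖ ≤ e m) →
      ∃ c : ℝ → E, ContDiff ℝ ∞ c ∧ c 0 = x ∧
        ∀ m, ∀ᶠ t in 𝓝 ((1 / 2 : ℝ) ^ m), c t = y m + (e m * (t - (1 / 2) ^ m)) • v := by
  have hp : ∀ m : ℕ, (0 : ℝ) < (1 / 2) ^ m := fun m => by positivity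
  let ρ : ∀ m : ℕ, ContDiffBump ((1 / 2 : ℝ) ^ m) := fun m =>
    ⟨(1 / 2) ^ m / 8, (1 / 2) ^ m / 4, by have := hp m; positivity, by linarith [hp m]⟩
  have hρ1 : ∀ m t, |t - (1 / 2) ^ m| < (1 / 2) ^ m / 8 → ρ m t = 1 := fun m t ht =>
    (ρ m).one_of_mem_closedBall (by rw [Metric.mem_closedBall, Real.dist_eq]; exact ht.le)
  have hρ0 : ∀ m t, (1 / 2) ^ m / 4 ≤ |t - (1 / 2) ^ m| → ρ m t = 0 := fun m t ht =>
    (ρ m).zero_of_le_dist (by rw [Real.dist_eq]; exact ht)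
  have hρj : ∀ m j t, j ≠ m → |t - (1 / 2) ^ m| < (1 / 2) ^ m / 8 → ρ j t = 0 := by
    intro m j t hjm ht
    apply hρ0
    have hm := hp m
    have hj := hp j
    rw [abs_lt] at ht
    rcases lt_or_gt_of_ne hjm with hlt | hlt
    · have h1 : (1 / 2 : ℝ) ^ m ≤ (1 / 2) ^ (j + 1) :=
        pow_le_pow_of_le_one (by norm_num) (by norm_num) hlt
      rw [pow_succ] at h1
      rw [le_abs]; right; linarith
    · have h1 : (1 / 2 : ℝ) ^ j ≤ (1 / 2) ^ (m + 1) :=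
        pow_le_pow_of_le_one (by norm_num) (by norm_num) hlt
      rw [pow_succ] at h1
      rw [le_abs]; left; linarith
  -- Near each time `(1/2)^m` at most one term of each of the two series is nonzero: the first series
  -- places the curve at `y m`, the second one makes it move in direction `v`.
  obtain ⟨a, ha, hA⟩ := exists_rapid_coeff (E := E) (fun m => ρ m) (fun m => (ρ m).contDiff)
    (fun m => (ρ m).hasCompactSupport)
  obtain ⟨b, hb, hBb⟩ := exists_rapid_coeff (E := E) (fun m t => ρ m t * (t - (1 / 2) ^ m))
    (fun m => (ρ m).contDiff.mul (contDiff_id.sub contDiff_const))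
    (fun m => (ρ m).hasCompactSupport.mul_right)
  have hv : 0 < 1 + ‖v‖ := by positivity
  refine ⟨fun m => min (a m) (b m / (1 + ‖v‖)), fun m => lt_min (ha m) (div_pos (hb m) hv),
    fun y hy => ?_⟩
  set e : ℕ → ℝ := fun m => min (a m) (b m / (1 + ‖v‖)) with he
  have he0 : ∀ m, 0 < e m := fun m => lt_min (ha m) (div_pos (hb m) hv)
  have h1 := hA (fun m => y m - x) fun m => (hy m).trans (min_le_left _ _)
  have h2 := hBb (fun m => e m • v) fun m => by
    rw [norm_smul, Real.norm_of_nonneg (he0 m).le]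
    calc e m * ‖v‖ ≤ b m / (1 + ‖v‖) * (1 + ‖v‖) := by
          gcongr
          · exact (div_pos (hb m) hv).le
          · exact min_le_right _ _
          · linarith
      _ = b m := by field_simp
  refine ⟨fun t => x + ((∑' m, ρ m t • (y m - x)) +
    ∑' m, (ρ m t * (t - (1 / 2) ^ m)) • (e m • v)), contDiff_const.add (h1.add h2), ?_, fun m => ?_⟩
  · have h0 : ∀ m, ρ m 0 = 0 := fun m => hρ0 m 0 (by
      rw [zero_sub, abs_neg, abs_of_pos (hp m)]; linarith [hp m])
    simp [h0]
  · have : ∀ᶠ t in 𝓝 ((1 / 2 : ℝ) ^ m), |t - (1 / 2) ^ m| < (1 / 2) ^ m / 8 := by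
      have := Metric.ball_mem_nhds ((1 / 2 : ℝ) ^ m) (show 0 < (1 / 2 : ℝ) ^ m / 8 by positivity)
      filter_upwards [this] with t ht
      rwa [Metric.mem_ball, Real.dist_eq] at ht
    filter_upwards [this] with t ht
    rw [tsum_eq_single m (fun j hj => by rw [hρj m j t hj ht, zero_smul]),
      tsum_eq_single m (fun j hj => by rw [hρj m j t hj ht, zero_mul, zero_smul]), hρ1 m t ht,
      smul_smul, one_mul, one_smul, mul_comm (e m)]
    abel

/-! ### Iterated directional derivatives -/

section
variable {E : Type*} [NormedAddCommGroup E] [NormedSpace ℝ E]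

/-- The function `f` sends smooth curves to smooth curves. -/
def SmoothAlongCurves (f : E → ℝ) : Prop :=
  ∀ c : ℝ → E, ContDiff ℝ ∞ c → ContDiff ℝ ∞ (f ∘ c)

/-- The `n`-th derivative of `f` at `x` along the direction `v`, computed on the line `x + r • v`. -/
noncomputable def iterLineDeriv (f : E → ℝ) (v : E) (n : ℕ) (x : E) : ℝ :=
  iteratedDeriv n (fun r : ℝ => f (x + r • v)) 0

theorem SmoothAlongCurves.line {f : E → ℝ} (h : SmoothAlongCurves f) (x v : E) :
    ContDiff ℝ ∞ (fun r : ℝ => f (x + r • v)) :=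
  h (fun r => x + r • v) (contDiff_const.add (contDiff_id.smul contDiff_const))

theorem tendsto_half_pow : Tendsto (fun m : ℕ => (1 / 2 : ℝ) ^ m) atTop (𝓝 0) :=
  tendsto_pow_atTop_nhds_zero_of_lt_one (by norm_num) (by norm_num)

theorem iterLineDeriv_line (f : E → ℝ) (v : E) (n : ℕ) (x : E) (s : ℝ) :
    iterLineDeriv f v n (x + s • v) = iteratedDeriv n (fun r : ℝ => f (x + r • v)) s := by
  have : (fun r : ℝ => f (x + s • v + r • v)) = fun r => (fun r => f (x + r • v)) (s + r) := by
    ext r; simp only [add_smul, add_assoc]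
  rw [iterLineDeriv, this, iteratedDeriv_comp_const_add (f := fun r : ℝ => f (x + r • v))]
  simp

theorem SmoothAlongCurves.hasLineDerivAt {f : E → ℝ} (h : SmoothAlongCurves f) (v : E) (n : ℕ)
    (x : E) :
    HasLineDerivAt ℝ (iterLineDeriv f v n) (iterLineDeriv f v (n + 1) x) x v := by
  unfold HasLineDerivAt
  simp only [iterLineDeriv_line]
  rw [iterLineDeriv, iteratedDeriv_succ]
  exact ((h.line x v).differentiable_iteratedDeriv n
    (by exact_mod_cast WithTop.coe_lt_top n) 0).hasDerivAt

theorem iterLineDeriv_eq_zero {f : E → ℝ} (v : E) (n : ℕ) {x : E} (hx : x ∉ tsupport f) :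
    iterLineDeriv f v n x = 0 := by
  have h1 : f =ᶠ[𝓝 x] 0 := notMem_tsupport_iff_eventuallyEq.1 hx
  have h2 : Tendsto (fun r : ℝ => x + r • v) (𝓝 0) (𝓝 x) := by
    have : Continuous (fun r : ℝ => x + r • v) := by fun_prop
    simpa using this.tendsto 0
  have h3 : (fun r : ℝ => f (x + r • v)) =ᶠ[𝓝 0] fun _ => 0 := h2.eventually h1
  rw [iterLineDeriv, h3.iteratedDeriv_eq]
  simp

variable [CompleteSpace E]

theorem SmoothAlongCurves.continuous {f : E → ℝ} (h : SmoothAlongCurves f) : Continuous f := by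
  rw [continuous_iff_continuousAt]
  intro x
  by_contra hx
  rw [Metric.continuousAt_iff] at hx
  push Not at hx
  obtain ⟨ε, hε, hx⟩ := hx
  obtain ⟨e, he, hcurve⟩ := exists_curve x (0 : E)
  choose y hy hfy using fun m => hx (e m) (he m)
  obtain ⟨c, hc, hc0, hcm⟩ := hcurve y fun m => by rw [← dist_eq_norm]; exact (hy m).le
  have hcy : ∀ m, c ((1 / 2) ^ m) = y m := fun m => by simpa using (hcm m).self_of_nhds
  have h1 : Tendsto (fun m : ℕ => f (y m)) atTop (𝓝 (f x)) := by
    have h2 := ((h c hc).continuous.tendsto 0).comp tendsto_half_pow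
    simpa only [Function.comp_def, hcy, hc0] using h2
  obtain ⟨m, hm⟩ := ((Metric.tendsto_nhds.1 h1) ε hε).exists
  exact absurd hm (not_lt.2 (hfy m))

theorem SmoothAlongCurves.locally_bounded {f : E → ℝ} (h : SmoothAlongCurves f) (v : E) (n : ℕ)
    (x : E) : ∃ C, ∀ᶠ y in 𝓝 x, |iterLineDeriv f v n y| ≤ C := by
  by_contra hx
  push Not at hx
  obtain ⟨e, he, hcurve⟩ := exists_curve x v
  have hex : ∀ m : ℕ, ∃ y, ‖y - x‖ ≤ e m ∧ m / e m ^ n < |iterLineDeriv f v n y| := fun m => by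
    obtain ⟨y, hy1, hy2⟩ := ((hx (m / e m ^ n)).and_eventually
      (Metric.ball_mem_nhds x (he m))).exists
    exact ⟨y, by rw [← dist_eq_norm]; exact (Metric.mem_ball.1 hy2).le, hy1⟩
  choose y hy hfy using hex
  obtain ⟨c, hc, hc0, hcm⟩ := hcurve y hy
  have hval : ∀ m : ℕ, iteratedDeriv n (f ∘ c) ((1 / 2) ^ m) = e m ^ n * iterLineDeriv f v n (y m) := by
    intro m
    have h1 : f ∘ c =ᶠ[𝓝 ((1 / 2 : ℝ) ^ m)]
        fun t => (fun s => f (y m + (e m * s) • v)) (t - (1 / 2) ^ m) := by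
      filter_upwards [hcm m] with t ht
      simp [ht]
    rw [h1.iteratedDeriv_eq, iteratedDeriv_comp_sub_const (f := fun s => f (y m + (e m * s) • v)),
      iteratedDeriv_comp_const_mul (f := fun r => f (y m + r • v))
        ((h.line (y m) v).of_le (by exact_mod_cast le_top))]
    simp [iterLineDeriv]
  have h1 : Tendsto (fun m : ℕ => |iteratedDeriv n (f ∘ c) ((1 / 2) ^ m)|) atTop
      (𝓝 |iteratedDeriv n (f ∘ c) 0|) :=
    ((((h c hc).continuous_iteratedDeriv n (by exact_mod_cast le_top)).tendsto 0).comp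
      tendsto_half_pow).abs
  have h2 : Tendsto (fun m : ℕ => |iteratedDeriv n (f ∘ c) ((1 / 2) ^ m)|) atTop atTop := by
    refine tendsto_atTop_mono (fun m => ?_) tendsto_natCast_atTop_atTop
    have h3 : 0 < e m ^ n := pow_pos (he m) n
    rw [hval, abs_mul, abs_of_pos h3, mul_comm]
    exact ((div_lt_iff₀ h3).1 (hfy m)).le
  exact not_tendsto_nhds_of_tendsto_atTop h2 _ h1

theorem SmoothAlongCurves.bounded {f : E → ℝ} (h : SmoothAlongCurves f) (hc : HasCompactSupport f)
    (v : E) (n : ℕ) : ∃ C, ∀ x, |iterLineDeriv f v n x| ≤ C := by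
  have : ∃ C, ∀ x ∈ tsupport f, |iterLineDeriv f v n x| ≤ C := by
    refine hc.isCompact.induction_on (p := fun s => ∃ C, ∀ x ∈ s, |iterLineDeriv f v n x| ≤ C)
      ⟨0, by simp⟩ ?_ ?_ ?_
    · rintro s t hst ⟨C, hC⟩
      exact ⟨C, fun x hx => hC x (hst hx)⟩
    · rintro s t ⟨C, hC⟩ ⟨D, hD⟩
      refine ⟨max C D, fun x hx => hx.elim (fun hx => ?_) fun hx => ?_⟩
      · exact (hC x hx).trans (le_max_left _ _)
      · exact (hD x hx).trans (le_max_right _ _)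
    · intro x _
      obtain ⟨C, hC⟩ := h.locally_bounded v n x
      exact ⟨_, mem_nhdsWithin_of_mem_nhds hC, C, fun y hy => hy⟩
  obtain ⟨C, hC⟩ := this
  refine ⟨max C 0, fun x => ?_⟩
  by_cases hx : x ∈ tsupport f
  · exact (hC x hx).trans (le_max_left _ _)
  · simp [iterLineDeriv_eq_zero v n hx]

/-- The iterated directional derivatives are not yet known to be continuous, but they are pointwise
limits of difference quotients. -/
theorem SmoothAlongCurves.measurable [MeasurableSpace E] [BorelSpace E]
    {f : E → ℝ} (h : SmoothAlongCurves f) (v : E) (n : ℕ) : Measurable (iterLineDeriv f v n) := by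
  induction n with
  | zero =>
    have : iterLineDeriv f v 0 = f := by ext x; simp [iterLineDeriv]
    rw [this]
    exact h.continuous.measurable
  | succ n ih =>
    refine measurable_of_tendsto_metrizable (f := fun (m : ℕ) x => ((1 / 2 : ℝ) ^ m)⁻¹ •
      (iterLineDeriv f v n (x + (1 / 2 : ℝ) ^ m • v) - iterLineDeriv f v n x)) (fun m => ?_)
      (tendsto_pi_nhds.2 fun x => ?_)
    · exact ((ih.comp (continuous_add_const ((1 / 2 : ℝ) ^ m • v)).measurable).sub ih).const_smul
        ((1 / 2 : ℝ) ^ m)⁻¹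
    · have h1 := (h.hasLineDerivAt v n x).tendsto_slope_zero
      refine h1.comp (tendsto_nhdsWithin_iff.2 ⟨tendsto_half_pow, ?_⟩)
      exact Eventually.of_forall fun m => by simp

end

/-! ### Decay of the Fourier transform -/

section
variable {E : Type*} [NormedAddCommGroup E] [InnerProductSpace ℝ E] [FiniteDimensional ℝ E]
  [MeasurableSpace E] [BorelSpace E]

theorem SmoothAlongCurves.integrable {f : E → ℝ} (h : SmoothAlongCurves f)
    (hc : HasCompactSupport f) (v : E) (n : ℕ) :
    Integrable (fun x => (iterLineDeriv f v n x : ℂ)) := by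
  obtain ⟨C, hC⟩ := h.bounded hc v n
  refine Integrable.ofReal (𝕜 := ℂ) ?_
  rw [← integrableOn_iff_integrable_of_support_subset (s := tsupport f)]
  · exact Measure.integrableOn_of_bounded hc.isCompact.measure_lt_top.ne
      (h.measurable v n).aestronglyMeasurable (M := C) (Eventually.of_forall hC)
  · intro x hx
    by_contra hx0
    exact hx (iterLineDeriv_eq_zero v n hx0)

/-- The Fourier transform turns a derivative along `v` into a multiplication, for functions that are
only assumed differentiable in that direction. -/
theorem fourier_of_hasLineDerivAt {g g' : E → ℂ} {v : E} (hg : Integrable g) (hg' : Integrable g')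
    (hd : ∀ x, HasLineDerivAt ℝ g (g' x) x v) (ξ : E) :
    𝓕 g' ξ = (2 * Real.pi * Complex.I * ⟪v, ξ⟫) * 𝓕 g ξ := by
  have hI : ∀ {u : E → ℂ}, Integrable u →
      Integrable (fun x => ContinuousLinearMap.mul ℝ ℂ (Real.fourierChar (-⟪x, ξ⟫) : ℂ) (u x)) :=
    fun hu => (Real.fourierIntegral_convergent_iff ξ).2 hu
  have key := integral_bilinear_hasLineDerivAt_right_eq_neg_left_of_integrable
    (μ := (volume : Measure E))
    (f := fun x => (Real.fourierChar (-⟪x, ξ⟫) : ℂ))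
    (f' := fun x => -(2 * Real.pi * Complex.I * ⟪v, ξ⟫) * (Real.fourierChar (-⟪x, ξ⟫) : ℂ))
    (g := g) (g' := g') (v := v) (B := ContinuousLinearMap.mul ℝ ℂ)
    (by simpa [mul_assoc] using ((hI hg).const_mul (-(2 * Real.pi * Complex.I * ⟪v, ξ⟫))))
    (hI hg') (hI hg) (fun x _ => ?_) (fun x _ => hd x)
  · rw [Real.fourier_eq, Real.fourier_eq]
    simp only [ContinuousLinearMap.mul_apply', mul_assoc, integral_const_mul] at key
    simp only [Circle.smul_def, smul_eq_mul]
    rw [key]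
    ring
  · have h1 := (Real.hasFDerivAt_fourierChar_neg_bilinear_left (innerSL ℝ) x ξ).hasLineDerivAt v
    have h2 : ((-2 * Real.pi * Complex.I * (Real.fourierChar (-⟪x, ξ⟫) : ℂ)) •
        (Complex.ofRealCLM ∘L ((innerSL ℝ (E := E)).flip ξ))) v =
        -(2 * Real.pi * Complex.I * ⟪v, ξ⟫) * (Real.fourierChar (-⟪x, ξ⟫) : ℂ) := by
      change (-2 * Real.pi * Complex.I * (Real.fourierChar (-⟪x, ξ⟫) : ℂ)) * (⟪v, ξ⟫ : ℂ) = _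
      ring
    rw [← h2]
    exact h1

theorem SmoothAlongCurves.fourier_pow_le {f : E → ℝ} (h : SmoothAlongCurves f)
    (hc : HasCompactSupport f) (v : E) (n : ℕ) :
    ∃ C, ∀ ξ, |⟪v, ξ⟫| ^ n * ‖𝓕 (fun x => (f x : ℂ)) ξ‖ ≤ C := by
  have h0 : ∀ n ξ, 𝓕 (fun x => (iterLineDeriv f v n x : ℂ)) ξ =
      (2 * Real.pi * Complex.I * ⟪v, ξ⟫) ^ n * 𝓕 (fun x => (f x : ℂ)) ξ := by
    intro n ξ
    induction n with
    | zero => simp [iterLineDeriv]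
    | succ n ih =>
      rw [fourier_of_hasLineDerivAt (v := v) (h.integrable hc v n) (h.integrable hc v (n + 1))
        (fun x => ?_) ξ, ih]
      · ring
      · exact (h.hasLineDerivAt v n x).ofReal_comp
  refine ⟨∫ x, ‖(iterLineDeriv f v n x : ℂ)‖, fun ξ => ?_⟩
  have h1 : ‖𝓕 (fun x => (iterLineDeriv f v n x : ℂ)) ξ‖ ≤ ∫ x, ‖(iterLineDeriv f v n x : ℂ)‖ :=
    VectorFourier.norm_fourierIntegral_le_integral_norm _ _ _ _ _
  refine le_trans ?_ h1
  rw [h0, norm_mul, norm_pow]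
  gcongr
  simp only [norm_mul, Complex.norm_real, Complex.norm_I, Complex.norm_ofNat, Real.norm_eq_abs,
    abs_of_pos Real.pi_pos]
  nlinarith [Real.pi_gt_three, abs_nonneg ⟪v, ξ⟫]

end

theorem SmoothAlongCurves.contDiff_of_compact {d : ℕ} {f : EuclideanSpace ℝ (Fin d) → ℝ}
    (h : SmoothAlongCurves f) (hc : HasCompactSupport f) : ContDiff ℝ ∞ f := by
  rcases Nat.eq_zero_or_pos d with rfl | hd
  · rw [show f = fun _ => f 0 from funext fun x => congrArg f (Subsingleton.elim _ _)]
    exact contDiff_const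
  have : Nonempty (Fin d) := ⟨⟨0, hd⟩⟩
  set F : EuclideanSpace ℝ (Fin d) → ℂ := fun x => (f x : ℂ) with hF
  have hFc : Continuous F := Complex.continuous_ofReal.comp h.continuous
  have hFi : Integrable F := by
    simpa [iterLineDeriv] using h.integrable hc 0 0
  have hFourier : Continuous (𝓕 F) := VectorFourier.fourierIntegral_continuous Real.continuous_fourierChar
    continuous_inner hFi
  have hdecay : ∀ n : ℕ, ∃ C, ∀ ξ, ‖ξ‖ ^ n * ‖𝓕 F ξ‖ ≤ C := by
    intro n
    choose C hC using fun i : Fin d => h.fourier_pow_le hc (EuclideanSpace.single i 1) n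
    refine ⟨(d : ℝ) ^ n * ∑ i, |C i|, fun ξ => ?_⟩
    obtain ⟨i, hi⟩ := Finite.exists_max fun i => |ξ i|
    have h1 : ‖ξ‖ ≤ d * |ξ i| := by
      calc ‖ξ‖ = ‖∑ j, ξ j • EuclideanSpace.single j (1 : ℝ)‖ := by
            congr 1; ext k; simp [Finset.sum_apply, Pi.single_apply]
        _ ≤ ∑ j, |ξ j| := (norm_sum_le _ _).trans (by simp [norm_smul])
        _ ≤ ∑ j : Fin d, |ξ i| := Finset.sum_le_sum fun j _ => hi j
        _ = d * |ξ i| := by simp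
    have h2 := hC i ξ
    simp only [EuclideanSpace.inner_single_left, map_one, one_mul] at h2
    calc ‖ξ‖ ^ n * ‖𝓕 F ξ‖ ≤ (d * |ξ i|) ^ n * ‖𝓕 F ξ‖ := by gcongr
      _ = d ^ n * (|ξ i| ^ n * ‖𝓕 F ξ‖) := by ring
      _ ≤ d ^ n * ∑ i, |C i| := by
        gcongr
        exact (h2.trans (le_abs_self _)).trans
          (Finset.single_le_sum (f := fun i => |C i|) (fun i _ => abs_nonneg _) (Finset.mem_univ i))
  have hint : ∀ n : ℕ, Integrable (fun ξ => ‖ξ‖ ^ n * ‖𝓕 F ξ‖) := by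
    intro n
    obtain ⟨C₁, h₁⟩ := hdecay 0
    obtain ⟨C₂, h₂⟩ := hdecay (n + (volume : Measure (EuclideanSpace ℝ (Fin d))).integrablePower)
    exact integrable_of_le_of_pow_mul_le (by simpa using h₁) h₂ hFourier.aestronglyMeasurable
  have hinv : 𝓕⁻ (𝓕 F) = F := hFc.fourierInv_fourier_eq hFi
    ((integrable_norm_iff hFourier.aestronglyMeasurable).1 (by simpa using hint 0))
  have hsm : ContDiff ℝ ∞ F := by
    have h1 : 𝓕⁻ (𝓕 F) = 𝓕 (𝓕 F) ∘ Neg.neg := funext fun x => Real.fourierInv_eq_fourier_neg _ x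
    rw [← hinv, h1]
    exact (Real.contDiff_fourier fun n _ => hint n).comp contDiff_neg
  exact Complex.reCLM.contDiff.comp hsm

theorem SmoothAlongCurves.contDiff {d : ℕ} {f : EuclideanSpace ℝ (Fin d) → ℝ}
    (h : SmoothAlongCurves f) : ContDiff ℝ ∞ f := by
  rw [contDiff_iff_contDiffAt]
  intro x
  let χ : ContDiffBump x := ⟨1, 2, one_pos, one_lt_two⟩
  have h1 : SmoothAlongCurves (fun y => χ y * f y) := fun c hc =>
    (χ.contDiff.comp hc).mul (h c hc)
  have h2 := h1.contDiff_of_compact χ.hasCompactSupport.mul_right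
  refine h2.contDiffAt.congr_of_eventuallyEq ?_
  filter_upwards [χ.eventuallyEq_one] with y hy
  simp [hy]

/-- Boman's theorem: a function `f : ℝ^d → ℝ` sending smooth curves to smooth curves
is smooth. -/
theorem boman_theorem (d : ℕ) (f : (Fin d → ℝ) → ℝ)
    (h : ∀ c : ℝ → (Fin d → ℝ), ContDiff ℝ (⊤ : ℕ∞) c → ContDiff ℝ (⊤ : ℕ∞) (f ∘ c)) :
    ContDiff ℝ (⊤ : ℕ∞) f := by
  let L := EuclideanSpace.equiv (Fin d) ℝ
  have h1 : SmoothAlongCurves (f ∘ L) := fun c hc => h (L ∘ c) (L.contDiff.comp hc)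
  have h2 := h1.contDiff.comp L.symm.contDiff
  have h3 : (f ∘ L) ∘ L.symm = f := by ext x; simp
  rwa [h3] at h2
end
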